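/- arXiv:1907.04999 — 5 statements merged into one kernel-verified Lean document; each statement's English description precedes it below -/
import Mathlib

section
/- For every y ∈ ℝ^N one has ⟨a(y), y⟩ ≥ (c₁/(p−1))‖y‖^p. (Lemma 2(c) of the paper.) -/
/-!
Fix `y ≠ 0` and look at `g t = ⟪a (t y), y⟫` on the ray `t > 0`. Ellipticity and the lower bound
on `ϑ` give `g' t = ⟪∇a (t y) y, y⟫ ≥ ϑ (t‖y‖) / (t‖y‖) * ‖y‖² ≥ c₁ t ^ (p - 2) ‖y‖ ^ p`, which is
the derivative of `c₁ / (p - 1) * t ^ (p - 1) * ‖y‖ ^ p`. Hence the difference of the two functions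
is monotone on `(0, ∞)`. Since `a₀ > 0`, `g` is nonnegative, so the limit of the difference at `0⁺`
is not negative, and evaluating at `t = 1` gives the claim.
-/

open scoped RealInnerProductSpace

/-- Lemma 2(c): coercivity estimate `⟨a(y), y⟩ ≥ (c₁/(p-1)) ‖y‖^p`. -/
theorem lemma2c
    (N : ℕ) (hN : 1 ≤ N) (p : ℝ) (hp : 1 < p)
    (ϑ ϑ' : ℝ → ℝ) (chat c₀ c₁ c₂ : ℝ)
    (hchat : 0 < chat) (hchatc₀ : chat ≤ c₀) (hc₁ : 0 < c₁) (hc₂ : 0 < c₂)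
    (hϑpos : ∀ t : ℝ, 0 < t → 0 < ϑ t)
    (hϑderiv : ∀ t : ℝ, 0 < t → HasDerivAt ϑ (ϑ' t) t)
    (hϑ'cont : ContinuousOn ϑ' (Set.Ioi 0))
    (hϑ1 : ∀ t : ℝ, 0 < t → chat ≤ ϑ' t * t / ϑ t ∧ ϑ' t * t / ϑ t ≤ c₀)
    (hϑ2 : ∀ t : ℝ, 0 < t → c₁ * t ^ (p - 1) ≤ ϑ t ∧ ϑ t ≤ c₂ * (1 + t ^ (p - 1)))
    (a₀ : ℝ → ℝ) (ha₀pos : ∀ t : ℝ, 0 < t → 0 < a₀ t)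
    (ha₀C1 : ContDiffOn ℝ 1 a₀ (Set.Ioi 0))
    (ha₀mono : StrictMonoOn (fun t => a₀ t * t) (Set.Ioi 0))
    (ha₀lim : Filter.Tendsto (fun t => a₀ t * t) (nhdsWithin 0 (Set.Ioi 0)) (nhds 0))
    (a : EuclideanSpace ℝ (Fin N) → EuclideanSpace ℝ (Fin N))
    (ha : ∀ y : EuclideanSpace ℝ (Fin N), y ≠ 0 → a y = a₀ ‖y‖ • y) (ha0 : a 0 = 0)
    (Da : EuclideanSpace ℝ (Fin N) → EuclideanSpace ℝ (Fin N) →L[ℝ] EuclideanSpace ℝ (Fin N))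
    (hDa : ∀ y : EuclideanSpace ℝ (Fin N), y ≠ 0 → HasFDerivAt a (Da y) y)
    (c₃ : ℝ) (hc₃ : 0 < c₃)
    (hDabound : ∀ y : EuclideanSpace ℝ (Fin N), y ≠ 0 → ‖Da y‖ ≤ c₃ * ϑ ‖y‖ / ‖y‖)
    (hDaelliptic : ∀ y : EuclideanSpace ℝ (Fin N), y ≠ 0 →
      ∀ ξ : EuclideanSpace ℝ (Fin N), (ϑ ‖y‖ / ‖y‖) * ‖ξ‖ ^ 2 ≤ ⟪Da y ξ, ξ⟫) :
    ∀ y : EuclideanSpace ℝ (Fin N), c₁ / (p - 1) * ‖y‖ ^ p ≤ ⟪a y, y⟫ := by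
  intro y
  by_cases hy : y = 0
  · subst hy
    simp [ha0, Real.zero_rpow (by linarith : p ≠ 0)]
  have hr : 0 < ‖y‖ := norm_pos_iff.mpr hy
  have hp1 : 0 < p - 1 := by linarith
  set h : ℝ → ℝ := fun t => ⟪a (t • y), y⟫ - c₁ / (p - 1) * ‖y‖ ^ p * t ^ (p - 1) with hh
  have hne : ∀ t : ℝ, 0 < t → t • y ≠ 0 := fun t ht => smul_ne_zero ht.ne' hy
  have hnorm : ∀ t : ℝ, 0 < t → ‖t • y‖ = t * ‖y‖ := fun t ht => by
    rw [norm_smul, Real.norm_of_nonneg ht.le]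
  have hderiv : ∀ t : ℝ, 0 < t → HasDerivAt h
      (⟪Da (t • y) y, y⟫ - c₁ * ‖y‖ ^ p * t ^ (p - 1 - 1)) t := by
    intro t ht
    have h1 : HasDerivAt (fun s : ℝ => s • y) y t := by
      simpa using (hasDerivAt_id t).smul_const y
    have h2 : HasDerivAt (fun s : ℝ => a (s • y)) (Da (t • y) y) t :=
      (hDa _ (hne t ht)).comp_hasDerivAt t h1
    have h3 : HasDerivAt (fun s : ℝ => ⟪a (s • y), y⟫) ⟪Da (t • y) y, y⟫ t := by
      simpa using h2.inner ℝ (hasDerivAt_const t y)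
    have h4 := (Real.hasDerivAt_rpow_const (p := p - 1) (Or.inl ht.ne')).const_mul
      (c₁ / (p - 1) * ‖y‖ ^ p)
    refine (h3.sub h4).congr_deriv ?_
    field_simp
  have hnonneg : ∀ t : ℝ, 0 < t →
      0 ≤ ⟪Da (t • y) y, y⟫ - c₁ * ‖y‖ ^ p * t ^ (p - 1 - 1) := by
    intro t ht
    have hs : 0 < t * ‖y‖ := mul_pos ht hr
    have h1 := hDaelliptic _ (hne t ht) y
    rw [hnorm t ht] at h1
    have h2 : c₁ * (t * ‖y‖) ^ (p - 1) / (t * ‖y‖) * ‖y‖ ^ 2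
        ≤ ϑ (t * ‖y‖) / (t * ‖y‖) * ‖y‖ ^ 2 := by
      have := (hϑ2 _ hs).1
      gcongr
    have h3 : c₁ * (t * ‖y‖) ^ (p - 1) / (t * ‖y‖) * ‖y‖ ^ 2
        = c₁ * ‖y‖ ^ p * t ^ (p - 1 - 1) := by
      rw [Real.mul_rpow ht.le hr.le, Real.rpow_sub_one ht.ne' (p - 1), Real.rpow_sub_one hr.ne' p]
      field_simp
    linarith
  have hmono : MonotoneOn h (Set.Ioi 0) := by
    refine monotoneOn_of_deriv_nonneg (convex_Ioi 0)
      (fun t ht => (hderiv t ht).continuousAt.continuousWithinAt)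
      (fun t ht => ?_) (fun t ht => ?_)
    all_goals rw [interior_Ioi] at ht
    · exact (hderiv t ht).differentiableAt.differentiableWithinAt
    · rw [(hderiv t ht).deriv]
      exact hnonneg t ht
  have hlow : ∀ t : ℝ, 0 < t → -(c₁ / (p - 1) * ‖y‖ ^ p * t ^ (p - 1)) ≤ h t := by
    intro t ht
    have h1 : 0 ≤ ⟪a (t • y), y⟫ := by
      rw [ha _ (hne t ht), hnorm t ht, inner_smul_left, inner_smul_left,
        real_inner_self_eq_norm_sq]
      have := ha₀pos _ (mul_pos ht hr)
      simp only [conj_trivial]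
      positivity
    simp only [hh]
    linarith
  have hlim : Filter.Tendsto (fun t : ℝ => -(c₁ / (p - 1) * ‖y‖ ^ p * t ^ (p - 1)))
      (nhdsWithin 0 (Set.Ioi 0)) (nhds 0) := by
    have h1 : Filter.Tendsto (fun t : ℝ => t ^ (p - 1)) (nhds 0) (nhds 0) := by
      have := (Real.continuousAt_rpow_const 0 (p - 1) (Or.inr hp1.le)).tendsto
      rwa [Real.zero_rpow hp1.ne'] at this
    simpa using ((h1.mono_left nhdsWithin_le_nhds).const_mul (c₁ / (p - 1) * ‖y‖ ^ p)).neg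
  have hone : 0 ≤ h 1 := by
    refine le_of_tendsto hlim ?_
    filter_upwards [Ioc_mem_nhdsGT (zero_lt_one' ℝ)] with t ht
    exact (hlow t ht.1).trans (hmono ht.1 (Set.mem_Ioi.mpr one_pos) ht.2)
  simp only [hh, one_smul, Real.one_rpow, mul_one] at hone
  linarith
end

section
/- For every y ∈ ℝ^N one has ηG(y) − ⟨a(y), y⟩ ≥ ((η−p)c₁/(p(p−1)))‖y‖^p − c̄. (Pointwise form of estimate (33) in the proof of Proposition 8.) -/
/-! Along a ray `s ↦ s • e` with `‖e‖ = 1`, the field `a` equals `(a₀ s * s) • e`, so testing the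
ellipticity of `∇a` with `ξ = e` gives `(a₀ s * s)' ≥ ϑ s / s ≥ c₁ * s ^ (p - 2)`
(`radial_hasDerivAt`). Since `a₀ s * s → 0` as `s → 0⁺`, integrating once gives
`a₀ s * s ≥ c₁ / (p - 1) * s ^ (p - 1)` (`le_of_deriv_rpow_le`), and integrating again gives
`G₀ t ≥ c₁ / (p * (p - 1)) * t ^ p` (`le_integral_of_rpow_le`). The estimate follows from
`η * G - ⟪a y, y⟫ = (η - p) * G + (p * G - a₀ ‖y‖ * ‖y‖ ^ 2)`. -/

open scoped RealInnerProductSpace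

/-- The radial profile `s ↦ ⟪a (s • e), e⟫ = a₀ s * s` of the field `a` inherits its
differentiability from `a`, by the chain rule. -/
lemma radial_hasDerivAt {E : Type*} [NormedAddCommGroup E] [InnerProductSpace ℝ E]
    {a₀ : ℝ → ℝ} {a : E → E} {Da : E →L[ℝ] E} {e : E} (he : ‖e‖ = 1) {t : ℝ} (ht : 0 < t)
    (ha : ∀ y : E, y ≠ 0 → a y = a₀ ‖y‖ • y) (hDa : HasFDerivAt a Da (t • e)) :
    HasDerivAt (fun s => a₀ s * s) ⟪Da e, e⟫ t := by
  have hline : HasDerivAt (fun s : ℝ => s • e) e t := by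
    simpa using (hasDerivAt_id t).smul_const e
  have h := (hDa.comp_hasDerivAt t hline).inner ℝ (hasDerivAt_const t e)
  simp only [inner_zero_right, zero_add] at h
  refine h.congr_of_eventuallyEq ?_
  filter_upwards [lt_mem_nhds ht] with s hs
  have he0 : e ≠ 0 := norm_ne_zero_iff.mp (by simp [he])
  simp [ha _ (smul_ne_zero hs.ne' he0), norm_smul, he, abs_of_pos hs, inner_smul_left]

/-- A function on `(0, ∞)` with limit `0` at `0⁺` and derivative at least `c * s ^ (q - 1)`
dominates the primitive `c / q * s ^ q`, because the difference is monotone with limit `0`. -/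
lemma le_of_deriv_rpow_le {h h' : ℝ → ℝ} {c q : ℝ} (hq : 0 < q)
    (hd : ∀ t, 0 < t → HasDerivAt h (h' t) t) (hle : ∀ t, 0 < t → c * t ^ (q - 1) ≤ h' t)
    (hlim : Filter.Tendsto h (nhdsWithin 0 (Set.Ioi 0)) (nhds 0)) {t : ℝ} (ht : 0 < t) :
    c / q * t ^ q ≤ h t := by
  have hkd : ∀ s, 0 < s →
      HasDerivAt (fun s => h s - c / q * s ^ q) (h' s - c * s ^ (q - 1)) s := by
    intro s hs
    have h1 := (hd s hs).sub
      ((Real.hasDerivAt_rpow_const (p := q) (Or.inl hs.ne')).const_mul (c / q))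
    rwa [← mul_assoc, div_mul_cancel₀ c hq.ne'] at h1
  have hmono : MonotoneOn (fun s => h s - c / q * s ^ q) (Set.Ioi 0) := by
    refine monotoneOn_of_deriv_nonneg (convex_Ioi 0)
      (fun s hs => (hkd s hs).continuousAt.continuousWithinAt) ?_ ?_
    · rw [interior_Ioi]
      exact fun s hs => (hkd s hs).differentiableAt.differentiableWithinAt
    · rw [interior_Ioi]
      intro s hs
      rw [(hkd s hs).deriv]
      exact sub_nonneg.mpr (hle s hs)
  have hpow : Filter.Tendsto (fun s : ℝ => c / q * s ^ q) (nhdsWithin 0 (Set.Ioi 0)) (nhds 0) := by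
    have := ((Real.continuousAt_rpow_const 0 q (Or.inr hq.le)).const_mul (c / q)).tendsto
    simp only [Real.zero_rpow hq.ne', mul_zero] at this
    exact this.mono_left nhdsWithin_le_nhds
  have hk : Filter.Tendsto (fun s => h s - c / q * s ^ q) (nhdsWithin 0 (Set.Ioi 0)) (nhds 0) := by
    simpa using hlim.sub hpow
  have h0 : 0 ≤ h t - c / q * t ^ q := by
    refine le_of_tendsto hk ?_
    filter_upwards [Ioo_mem_nhdsGT ht] with s hs
    exact hmono hs.1 ht hs.2.le
  linarith

/-- A function that is monotone on `[0, t]` and bounded below there by `c * s ^ q` has integral at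
least the integral of that power; monotonicity provides the integrability. -/
lemma le_integral_of_rpow_le {h : ℝ → ℝ} {c q t : ℝ} (hq : 0 < q) (ht : 0 ≤ t)
    (hmono : MonotoneOn h (Set.Icc 0 t)) (hle : ∀ s ∈ Set.Icc 0 t, c * s ^ q ≤ h s) :
    c / (q + 1) * t ^ (q + 1) ≤ ∫ s in (0 : ℝ)..t, h s := by
  have hint : (∫ s in (0 : ℝ)..t, c * s ^ q) = c / (q + 1) * t ^ (q + 1) := by
    rw [intervalIntegral.integral_const_mul, integral_rpow (Or.inl (by linarith)),
      Real.zero_rpow (by linarith)]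
    ring
  rw [← hint]
  refine intervalIntegral.integral_mono_on ht ?_ ?_ hle
  · exact (intervalIntegral.intervalIntegrable_rpow' (by linarith)).const_mul c
  · exact MonotoneOn.intervalIntegrable (by rwa [Set.uIcc_of_le ht])

/-- Pointwise form of estimate (33):
`ηG(y) − ⟨a(y), y⟩ ≥ ((η−p)c₁/(p(p−1)))‖y‖^p − c̄`. -/
theorem estimate33
    (N : ℕ) (hN : 1 ≤ N) (p : ℝ) (hp : 1 < p)
    (ϑ ϑ' : ℝ → ℝ) (chat c₀ c₁ c₂ : ℝ)
    (hchat : 0 < chat) (hchatc₀ : chat ≤ c₀) (hc₁ : 0 < c₁) (hc₂ : 0 < c₂)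
    (hϑpos : ∀ t : ℝ, 0 < t → 0 < ϑ t)
    (hϑderiv : ∀ t : ℝ, 0 < t → HasDerivAt ϑ (ϑ' t) t)
    (hϑ'cont : ContinuousOn ϑ' (Set.Ioi 0))
    (hϑ1 : ∀ t : ℝ, 0 < t → chat ≤ ϑ' t * t / ϑ t ∧ ϑ' t * t / ϑ t ≤ c₀)
    (hϑ2 : ∀ t : ℝ, 0 < t → c₁ * t ^ (p - 1) ≤ ϑ t ∧ ϑ t ≤ c₂ * (1 + t ^ (p - 1)))
    (a₀ : ℝ → ℝ) (ha₀pos : ∀ t : ℝ, 0 < t → 0 < a₀ t)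
    (ha₀C1 : ContDiffOn ℝ 1 a₀ (Set.Ioi 0))
    (ha₀mono : StrictMonoOn (fun t => a₀ t * t) (Set.Ioi 0))
    (ha₀lim : Filter.Tendsto (fun t => a₀ t * t) (nhdsWithin 0 (Set.Ioi 0)) (nhds 0))
    (a : EuclideanSpace ℝ (Fin N) → EuclideanSpace ℝ (Fin N))
    (ha : ∀ y : EuclideanSpace ℝ (Fin N), y ≠ 0 → a y = a₀ ‖y‖ • y) (ha0 : a 0 = 0)
    (Da : EuclideanSpace ℝ (Fin N) → EuclideanSpace ℝ (Fin N) →L[ℝ] EuclideanSpace ℝ (Fin N))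
    (hDa : ∀ y : EuclideanSpace ℝ (Fin N), y ≠ 0 → HasFDerivAt a (Da y) y)
    (c₃ : ℝ) (hc₃ : 0 < c₃)
    (hDabound : ∀ y : EuclideanSpace ℝ (Fin N), y ≠ 0 → ‖Da y‖ ≤ c₃ * ϑ ‖y‖ / ‖y‖)
    (hDaelliptic : ∀ y : EuclideanSpace ℝ (Fin N), y ≠ 0 →
      ∀ ξ : EuclideanSpace ℝ (Fin N), (ϑ ‖y‖ / ‖y‖) * ‖ξ‖ ^ 2 ≤ ⟪Da y ξ, ξ⟫)
    (G₀ : ℝ → ℝ) (hG₀ : ∀ t : ℝ, 0 ≤ t → G₀ t = ∫ s in (0:ℝ)..t, a₀ s * s)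
    (G : EuclideanSpace ℝ (Fin N) → ℝ) (hG : ∀ y : EuclideanSpace ℝ (Fin N), G y = G₀ ‖y‖)
    (cbar : ℝ) (hcbar : 0 < cbar)
    (hGa : ∀ t : ℝ, 0 < t → -cbar ≤ p * G₀ t - a₀ t * t ^ 2)
    (η : ℝ) (hη : p < η) :
    ∀ y : EuclideanSpace ℝ (Fin N),
      (η - p) * c₁ / (p * (p - 1)) * ‖y‖ ^ p - cbar ≤ η * G y - ⟪a y, y⟫ := by
  intro y
  rcases eq_or_ne y 0 with rfl | hy
  · have hG0 : G 0 = 0 := by rw [hG, norm_zero, hG₀ 0 le_rfl, intervalIntegral.integral_same]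
    rw [hG0, ha0, norm_zero, Real.zero_rpow (by linarith)]
    simp [hcbar.le]
  have ht : 0 < ‖y‖ := norm_pos_iff.mpr hy
  -- the radial direction of `y`, along which ellipticity is tested
  set e : EuclideanSpace ℝ (Fin N) := ‖y‖⁻¹ • y with he_def
  have he : ‖e‖ = 1 := by rw [he_def, norm_smul, norm_inv, norm_norm, inv_mul_cancel₀ ht.ne']
  have he0 : e ≠ 0 := norm_ne_zero_iff.mp (by simp [he])
  have hderiv_le : ∀ s : ℝ, 0 < s → c₁ * s ^ (p - 1 - 1) ≤ ⟪Da (s • e) e, e⟫ := by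
    intro s hs
    have h1 := hDaelliptic (s • e) (smul_ne_zero hs.ne' he0) e
    rw [norm_smul, he, Real.norm_eq_abs, abs_of_pos hs, mul_one, one_pow, mul_one] at h1
    refine le_trans ?_ h1
    rw [Real.rpow_sub_one hs.ne', ← mul_div_assoc]
    exact div_le_div_of_nonneg_right (hϑ2 s hs).1 hs.le
  have hflux : ∀ s : ℝ, 0 < s → c₁ / (p - 1) * s ^ (p - 1) ≤ a₀ s * s := fun s hs =>
    le_of_deriv_rpow_le (h := fun s => a₀ s * s) (h' := fun s => ⟪Da (s • e) e, e⟫)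
      (sub_pos.mpr hp)
      (fun t ht => radial_hasDerivAt he ht ha (hDa _ (smul_ne_zero ht.ne' he0)))
      hderiv_le ha₀lim hs
  -- `a₀ s * s` vanishes at `s = 0` whatever the value `a₀ 0`, so monotonicity extends to `0`
  have hmono : MonotoneOn (fun s => a₀ s * s) (Set.Icc 0 ‖y‖) := by
    intro s hs r hr hsr
    rcases hs.1.eq_or_lt with rfl | hs0
    · rcases hr.1.eq_or_lt with rfl | hr0
      · exact le_rfl
      · simpa using (mul_pos (ha₀pos r hr0) hr0).le
    · exact ha₀mono.monotoneOn hs0 (hs0.trans_le hsr) hsr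
  have hGlow : c₁ / (p * (p - 1)) * ‖y‖ ^ p ≤ G₀ ‖y‖ := by
    have h1 := le_integral_of_rpow_le (c := c₁ / (p - 1)) (q := p - 1) (sub_pos.mpr hp) ht.le
      hmono (by
        intro s hs
        rcases hs.1.eq_or_lt with rfl | hs0
        · simp [Real.zero_rpow (sub_pos.mpr hp).ne']
        · exact hflux s hs0)
    rw [← hG₀ _ ht.le, sub_add_cancel, div_div, mul_comm (p - 1) p] at h1
    exact h1
  have hinner : ⟪a y, y⟫ = a₀ ‖y‖ * ‖y‖ ^ 2 := by
    rw [ha y hy, real_inner_smul_left, real_inner_self_eq_norm_sq]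
  rw [hG, hinner]
  have h2 := mul_le_mul_of_nonneg_left hGlow (sub_pos.mpr hη).le
  have h3 := hGa ‖y‖ ht
  have h4 : (η - p) * c₁ / (p * (p - 1)) * ‖y‖ ^ p
      = (η - p) * (c₁ / (p * (p - 1)) * ‖y‖ ^ p) := by ring
  rw [h4]
  linarith
end

section
/- For every ε > 0 there exist δ > 0 and c₂₆ > 0 such that |F(x)| ≤ (ε/p)|x|^p for all x with |x| ≤ δ, and F(x) ≤ c₂₆|x|^r − (c₂*/p)|x|^p for all x with |x| > δ. (Estimates (39)–(40) in the proof of Proposition 10.) -/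
/-!
Both estimates come from integrating pointwise bounds on `f` by powers over `[0, |x|]`
(`integral_le_of_le_rpow`). Near `0`, the limit hypothesis gives `|f s| ≤ ε |s| ^ (p - 1)`, which
integrates to the first estimate. Beyond `M`, dividing the growth condition by `|s|` and integrating
from `M` bounds `F x` by `c₁/r |x| ^ r - c₂/p |x| ^ p` plus a constant; since `F` is bounded on
`[-M, M]`, after enlarging the constant to some `K ≥ 0` this holds for every `x`
(`exists_integral_le_add_const`). Finally, `K ≤ K δ ^ (-r) |x| ^ r` when `|x| > δ`, so `K` is absorbed
into the coefficient of `|x| ^ r`. Negative `x` are handled by applying the half-line lemmas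
to `s ↦ -f (-s)`.
-/

theorem integral_le_of_le_rpow {g : ℝ → ℝ} (hg : Continuous g) {A B p r a b : ℝ}
    (hp : 0 < p) (hr : 0 < r) (hab : a ≤ b)
    (h : ∀ s ∈ Set.Ioo a b, g s ≤ A * s ^ (r - 1) - B * s ^ (p - 1)) :
    ∫ s in a..b, g s ≤ A / r * (b ^ r - a ^ r) - B / p * (b ^ p - a ^ p) := by
  have hir : IntervalIntegrable (fun s : ℝ => A * s ^ (r - 1)) MeasureTheory.volume a b :=
    (intervalIntegral.intervalIntegrable_rpow' (by linarith)).const_mul A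
  have hip : IntervalIntegrable (fun s : ℝ => B * s ^ (p - 1)) MeasureTheory.volume a b :=
    (intervalIntegral.intervalIntegrable_rpow' (by linarith)).const_mul B
  calc ∫ s in a..b, g s ≤ ∫ s in a..b, (A * s ^ (r - 1) - B * s ^ (p - 1)) :=
        intervalIntegral.integral_mono_on_of_le_Ioo hab (hg.intervalIntegrable _ _)
          (hir.sub hip) h
    _ = A / r * (b ^ r - a ^ r) - B / p * (b ^ p - a ^ p) := by
        rw [intervalIntegral.integral_sub hir hip, intervalIntegral.integral_const_mul,
          intervalIntegral.integral_const_mul, integral_rpow (Or.inl (by linarith)),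
          integral_rpow (Or.inl (by linarith)), sub_add_cancel, sub_add_cancel]
        ring

theorem abs_integral_le_of_abs_le_rpow {g : ℝ → ℝ} (hg : Continuous g) {ε p x : ℝ}
    (hp : 0 < p) (hx : 0 ≤ x) (h : ∀ s ∈ Set.Ioo 0 x, |g s| ≤ ε * s ^ (p - 1)) :
    |∫ s in (0:ℝ)..x, g s| ≤ ε / p * x ^ p := by
  have h1 := integral_le_of_le_rpow (A := ε) (B := 0) hg hp hp hx fun s hs => by
    have := le_of_abs_le (h s hs)
    linarith
  have h2 := integral_le_of_le_rpow (g := fun s => -g s) (A := ε) (B := 0) hg.neg hp hp hx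
      fun s hs => by
    have := neg_le_of_abs_le (h s hs)
    linarith
  rw [intervalIntegral.integral_neg] at h2
  simp only [Real.zero_rpow hp.ne', zero_div, zero_mul, sub_zero] at h1 h2
  rw [abs_le]
  constructor <;> linarith

/-- A growth condition valid only beyond `M` yields a bound on the primitive valid on the whole
half-line, at the cost of an additive constant that absorbs its values on `[0, M]`. -/
theorem exists_integral_le_add_const {g : ℝ → ℝ} (hg : Continuous g) {c₁ c₂ p r M : ℝ}
    (hp : 0 < p) (hr : 0 < r) (hM : 0 < M) (hc₁ : 0 < c₁)
    (h : ∀ s, M ≤ s → g s * s ≤ c₁ * s ^ r - c₂ * s ^ p) :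
    ∃ K : ℝ, 0 ≤ K ∧ ∀ x, 0 ≤ x →
      ∫ s in (0:ℝ)..x, g s ≤ c₁ / r * x ^ r - c₂ / p * x ^ p + K := by
  have hcont : Continuous fun x : ℝ => (∫ s in (0:ℝ)..x, g s) + c₂ / p * x ^ p :=
    (intervalIntegral.continuous_primitive (fun a b => hg.intervalIntegrable a b) 0).add
      (continuous_const.mul (Real.continuous_rpow_const hp.le))
  obtain ⟨K, hK⟩ := (isCompact_Icc (a := (0:ℝ)) (b := M)).bddAbove_image hcont.continuousOn
  have hK' : ∀ x ∈ Set.Icc 0 M, (∫ s in (0:ℝ)..x, g s) + c₂ / p * x ^ p ≤ max K 0 :=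
    fun x hx => (hK (Set.mem_image_of_mem _ hx)).trans (le_max_left _ _)
  refine ⟨max K 0, le_max_right _ _, fun x hx => ?_⟩
  rcases le_total x M with hxM | hMx
  · have h1 := hK' x ⟨hx, hxM⟩
    have h2 : 0 ≤ c₁ / r * x ^ r := by positivity
    linarith
  · have h1 := hK' M ⟨hM.le, le_rfl⟩
    have h2 : 0 ≤ c₁ / r * M ^ r := by positivity
    have h3 := integral_le_of_le_rpow (A := c₁) (B := c₂) hg hp hr hMx fun s hs => by
      have hs0 : 0 < s := hM.trans hs.1
      refine le_of_mul_le_mul_right ?_ hs0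
      have e (q : ℝ) : s ^ (q - 1) * s = s ^ q := by
        rw [← Real.rpow_add_one hs0.ne', sub_add_cancel]
      rw [sub_mul, mul_assoc, mul_assoc, e, e]
      exact h s hs.1.le
    rw [← intervalIntegral.integral_add_adjacent_intervals (hg.intervalIntegrable 0 M)
      (hg.intervalIntegrable M x)]
    linarith

theorem integral_zero_neg_eq (f : ℝ → ℝ) (x : ℝ) :
    ∫ s in (0:ℝ)..x, f s = ∫ s in (0:ℝ)..(-x), -f (-s) := by
  rw [intervalIntegral.integral_neg, intervalIntegral.integral_comp_neg, neg_neg, neg_zero,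
    ← intervalIntegral.integral_symm]

/-- Estimates (39)–(40) in the proof of Proposition 10. -/
theorem estimates39_40
    (f : ℝ → ℝ) (hf : Continuous f)
    (F : ℝ → ℝ) (hF : ∀ x : ℝ, F x = ∫ s in (0:ℝ)..x, f s)
    (p r M c₁star c₂star : ℝ) (hp : 1 < p) (hpr : p < r) (hM : 0 < M)
    (hc₁ : 0 < c₁star) (hc₂ : 0 < c₂star)
    (hf0 : Filter.Tendsto (fun x : ℝ => f x / (|x| ^ (p - 2) * x))
      (nhdsWithin 0 {(0:ℝ)}ᶜ) (nhds 0))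
    (hfgrowth : ∀ x : ℝ, M ≤ |x| → f x * x ≤ c₁star * |x| ^ r - c₂star * |x| ^ p) :
    ∀ ε : ℝ, 0 < ε → ∃ δ c₂₆ : ℝ, 0 < δ ∧ 0 < c₂₆ ∧
      (∀ x : ℝ, |x| ≤ δ → |F x| ≤ ε / p * |x| ^ p) ∧
      (∀ x : ℝ, δ < |x| → F x ≤ c₂₆ * |x| ^ r - c₂star / p * |x| ^ p) := by
  intro ε hε
  have hp0 : 0 < p := by linarith
  have hr0 : 0 < r := by linarith
  have hg : Continuous fun s => -f (-s) := (hf.comp continuous_neg).neg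
  obtain ⟨δ, hδ, hnear⟩ := Metric.tendsto_nhdsWithin_nhds.1 hf0 ε hε
  have hsmall : ∀ s : ℝ, s ≠ 0 → |s| < δ → |f s| ≤ ε * |s| ^ (p - 1) := by
    intro s hs hsδ
    have h1 := hnear (x := s) hs (by simpa using hsδ)
    have hs' : 0 < |s| := abs_pos.2 hs
    have e : |s| ^ (p - 2) * |s| = |s| ^ (p - 1) := by
      rw [← Real.rpow_add_one hs'.ne']
      congr 1
      ring
    rw [Real.dist_eq, sub_zero, abs_div, abs_mul,
      abs_of_nonneg (Real.rpow_nonneg (abs_nonneg s) (p - 2)), e,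
      div_lt_iff₀ (by positivity)] at h1
    exact h1.le
  obtain ⟨K₁, hK₁, hbd₁⟩ := exists_integral_le_add_const hf hp0 hr0 hM hc₁ (c₂ := c₂star)
    fun s hs => by
      simpa [abs_of_pos (hM.trans_le hs)] using
        hfgrowth s (by rwa [abs_of_pos (hM.trans_le hs)])
  obtain ⟨K₂, hK₂, hbd₂⟩ := exists_integral_le_add_const hg hp0 hr0 hM hc₁ (c₂ := c₂star)
    fun s hs => by
      simpa [abs_of_pos (hM.trans_le hs)] using
        hfgrowth (-s) (by rwa [abs_neg, abs_of_pos (hM.trans_le hs)])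
  have hbd : ∀ x, F x ≤ c₁star / r * |x| ^ r - c₂star / p * |x| ^ p + (K₁ + K₂) := by
    intro x
    rw [hF]
    rcases le_total 0 x with hx | hx
    · rw [abs_of_nonneg hx]
      linarith [hbd₁ x hx]
    · rw [abs_of_nonpos hx, integral_zero_neg_eq]
      linarith [hbd₂ (-x) (by linarith)]
  refine ⟨δ, c₁star / r + (K₁ + K₂) / δ ^ r, hδ, by positivity, fun x hxδ => ?_, fun x hx => ?_⟩
  · rw [hF]
    rcases le_total 0 x with hx | hx
    · rw [abs_of_nonneg hx] at hxδ ⊢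
      refine abs_integral_le_of_abs_le_rpow hf hp0 hx fun s hs => ?_
      have := hsmall s hs.1.ne' (by rw [abs_of_pos hs.1]; linarith [hs.2])
      rwa [abs_of_pos hs.1] at this
    · rw [abs_of_nonpos hx] at hxδ ⊢
      rw [integral_zero_neg_eq]
      refine abs_integral_le_of_abs_le_rpow hg hp0 (by linarith) fun s hs => ?_
      have := hsmall (-s) (neg_ne_zero.2 hs.1.ne')
        (by rw [abs_neg, abs_of_pos hs.1]; linarith [hs.2])
      rwa [abs_neg s, abs_of_pos hs.1, ← abs_neg (f (-s))] at this
  · have h1 : δ ^ r ≤ |x| ^ r := Real.rpow_le_rpow hδ.le hx.le hr0.le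
    have h2 : K₁ + K₂ ≤ (K₁ + K₂) / δ ^ r * |x| ^ r := by
      rw [div_mul_eq_mul_div, le_div_iff₀ (by positivity)]
      exact mul_le_mul_of_nonneg_left h1 (by positivity)
    linarith [hbd x]
end

section
/- g(t) ≤ 0 for all t ∈ [0,1]. (The abstract one-dimensional lemma behind claim (91) in the proof of Proposition 18.) -/
/-!
If `g t > 0` for some `t > 0`, then, since `g 1 = 0`, there is a first point `s > t` at which
`g s ≤ 0`. By continuity from the left `g s = 0`, while `g > 0` on `[t, s)`, so the left
difference quotients of `g` at `s` are negative and `g' s ≤ 0`, contradicting the positivity of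
`g'` at zeros of `g`. At `t = 0` the bound is the limit of `g < 0` on `(0, tstar)`.
-/

/-- The abstract one-dimensional lemma behind claim (91) in the proof of
Proposition 18: `g(t) ≤ 0` on `[0,1]`. -/
theorem one_dim_lemma_91
    (g g' : ℝ → ℝ)
    (hgcont : ContinuousOn g (Set.Icc 0 1))
    (hgderiv : ∀ t ∈ Set.Ioc (0:ℝ) 1, HasDerivWithinAt g (g' t) (Set.Icc 0 1) t)
    (tstar : ℝ) (htstar : tstar ∈ Set.Ioo (0:ℝ) 1)
    (hneg : ∀ t ∈ Set.Ioo (0:ℝ) tstar, g t < 0)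
    (hg1 : g 1 = 0)
    (hderivpos : ∀ t ∈ Set.Ioc (0:ℝ) 1, g t = 0 → 0 < g' t) :
    ∀ t ∈ Set.Icc (0:ℝ) 1, g t ≤ 0 := by
  intro t ht
  rcases eq_or_lt_of_le ht.1 with rfl | ht0
  · have hlim : Filter.Tendsto g (nhdsWithin 0 (Set.Ioi 0)) (nhds (g 0)) :=
      (hgcont 0 ht).mono_left <| by
        rw [← nhdsWithin_Ioo_eq_nhdsGT (zero_lt_one' ℝ)]
        exact nhdsWithin_mono _ Set.Ioo_subset_Icc_self
    refine le_of_tendsto hlim ?_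
    filter_upwards [Ioo_mem_nhdsGT htstar.1] with x hx using (hneg x hx).le
  by_contra! hpos
  have hclosed : IsClosed (Set.Icc t 1 ∩ g ⁻¹' Set.Iic 0) :=
    (hgcont.mono (Set.Icc_subset_Icc_left ht.1)).preimage_isClosed_of_isClosed
      isClosed_Icc isClosed_Iic
  obtain ⟨s, ⟨hs, hgs⟩, hleast⟩ :=
    (isCompact_Icc.of_isClosed_subset hclosed Set.inter_subset_left).exists_isLeast
      ⟨1, ⟨ht.2, le_rfl⟩, hg1.le⟩
  have hgs : g s ≤ 0 := hgs
  have hts : t < s := lt_of_le_of_ne hs.1 (by rintro rfl; exact absurd hpos hgs.not_gt)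
  have hs01 : s ∈ Set.Ioc (0:ℝ) 1 := ⟨ht0.trans hts, hs.2⟩
  have hleft : ∀ x ∈ Set.Ioo t s, 0 < g x := fun x hx => by
    by_contra! hx0
    exact absurd (hleast ⟨⟨hx.1.le, hx.2.le.trans hs.2⟩, hx0⟩) hx.2.not_ge
  have hev : ∀ᶠ x in nhdsWithin s (Set.Iio s), x ∈ Set.Ioo t s := Ioo_mem_nhdsLT hts
  have hder : HasDerivWithinAt g (g' s) (Set.Iio s) s := by
    refine (hgderiv s hs01).mono_of_mem_nhdsWithin ?_
    filter_upwards [hev] with x hx using ⟨(ht0.trans hx.1).le, hx.2.le.trans hs.2⟩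
  have hgs0 : g s = 0 := by
    refine le_antisymm hgs (ge_of_tendsto hder.continuousWithinAt ?_)
    filter_upwards [hev] with x hx using (hleft x hx).le
  refine absurd (hderivpos s hs01 hgs0) (not_lt.2 ?_)
  refine le_of_tendsto ((hasDerivWithinAt_iff_tendsto_slope' (by simp)).1 hder) ?_
  filter_upwards [hev] with x hx
  rw [slope_def_field, hgs0, sub_zero]
  exact div_nonpos_of_nonneg_of_nonpos (hleft x hx).le (sub_nonpos.2 hx.2.le)
end

section
/- There exists a unique t₁ ∈ (0,1) with g(t₁) = 0; moreover g(t) < 0 for all t ∈ (0,t₁) and g(t) > 0 for all t ∈ (t₁,1]. (The abstract one-dimensional lemma behind the existence and uniqueness of t(u) in (95) in the proof of Proposition 18.) -/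
/-!
At each zero `c ∈ (0, 1]` the function crosses from negative to positive, because its derivative there
is positive. Hence `g` can never come back to `0` once it is nonnegative: if `g a > 0` and `g ≤ 0`
somewhere to the right of `a`, then the first such point would be a zero approached through positive
values, contradicting the crossing direction. This persistence of positivity
(`pos_of_nonneg_left`) settles everything once the intermediate value theorem provides one zero.
-/

/-- A function with a positive slope limit at a zero `c` along a set accumulating at `c` takes, on that
set, a value of the same sign as `s - c`. -/
lemma exists_slope_sign {g : ℝ → ℝ} {d c : ℝ} {S : Set ℝ} (h : HasDerivWithinAt g d S c)
    (hd : 0 < d) (h0 : g c = 0) (hc : c ∉ S) (hS : c ∈ closure S) :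
    ∃ s ∈ S, 0 < (s - c)⁻¹ * g s := by
  have hlim := (hasDerivWithinAt_iff_tendsto_slope' hc).1 h
  have : (nhdsWithin c S).NeBot := mem_closure_iff_nhdsWithin_neBot.1 hS
  obtain ⟨s, hs, hsS⟩ := ((hlim.eventually_const_lt hd).and self_mem_nhdsWithin).exists
  exact ⟨s, hsS, by simpa [slope, h0] using hs⟩

/-- Once `g` is nonnegative at a point of `(0, 1]`, it is positive at every later point. -/
lemma pos_of_nonneg_left {g g' : ℝ → ℝ}
    (hgcont : ContinuousOn g (Set.Icc 0 1))
    (hgderiv : ∀ t ∈ Set.Ioc (0:ℝ) 1, HasDerivWithinAt g (g' t) (Set.Icc 0 1) t)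
    (hderivpos : ∀ t ∈ Set.Ioc (0:ℝ) 1, g t = 0 → 0 < g' t)
    {a t : ℝ} (ha : 0 < a) (hat : a < t) (ht : t ≤ 1) (hga : 0 ≤ g a) : 0 < g t := by
  by_contra! hgt
  obtain ⟨b, hab, hbt, hgb⟩ : ∃ b, a ≤ b ∧ b < t ∧ 0 < g b := by
    rcases hga.lt_or_eq with h | h
    · exact ⟨a, le_rfl, hat, h⟩
    · have ha1 : a ∈ Set.Ioc (0:ℝ) 1 := ⟨ha, by linarith⟩
      obtain ⟨s, hs, hpos⟩ := exists_slope_sign (S := Set.Ioo a t)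
        ((hgderiv a ha1).mono fun x hx => ⟨by linarith [hx.1], by linarith [hx.2]⟩)
        (hderivpos a ha1 h.symm) h.symm (by simp)
        (by rw [closure_Ioo hat.ne]; exact ⟨le_rfl, hat.le⟩)
      exact ⟨s, hs.1.le, hs.2, (pos_iff_pos_of_mul_pos hpos).1 (inv_pos.2 (sub_pos.2 hs.1))⟩
  have hcont : ContinuousOn g (Set.Icc b t) :=
    hgcont.mono (Set.Icc_subset_Icc (by linarith) ht)
  -- `m` is the first point of `[b, t]` at which `g ≤ 0`.
  obtain ⟨m, ⟨hm, hgm⟩, hmin⟩ : ∃ m, IsLeast (Set.Icc b t ∩ g ⁻¹' Set.Iic 0) m :=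
    (isCompact_Icc.of_isClosed_subset (hcont.preimage_isClosed_of_isClosed isClosed_Icc isClosed_Iic)
      Set.inter_subset_left).exists_isLeast ⟨t, ⟨hbt.le, le_rfl⟩, hgt⟩
  have hgm : g m ≤ 0 := hgm
  have hbm : b < m := lt_of_le_of_ne hm.1 (by rintro rfl; linarith)
  have hgm0 : g m = 0 := by
    obtain ⟨z, hz, hz0⟩ := intermediate_value_Icc' hbm.le
      (hcont.mono (Set.Icc_subset_Icc le_rfl hm.2)) ⟨hgm, hgb.le⟩
    have hmz : m ≤ z := hmin ⟨⟨hz.1, hz.2.trans hm.2⟩, hz0.le⟩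
    rwa [le_antisymm hz.2 hmz] at hz0
  have hm1 : m ∈ Set.Ioc (0:ℝ) 1 := ⟨by linarith, hm.2.trans ht⟩
  obtain ⟨s, hs, hpos⟩ := exists_slope_sign (S := Set.Ioo b m)
    ((hgderiv m hm1).mono fun x hx => ⟨by linarith [hx.1], by linarith [hx.2, hm1.2]⟩)
    (hderivpos m hm1 hgm0) hgm0 (by simp)
    (by rw [closure_Ioo hbm.ne]; exact ⟨hbm.le, le_rfl⟩)
  have hgs : g s < 0 := (neg_iff_neg_of_mul_pos hpos).1 (inv_lt_zero.2 (sub_neg.2 hs.2))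
  have hms : m ≤ s := hmin ⟨⟨hs.1.le, hs.2.le.trans hm.2⟩, hgs.le⟩
  exact absurd hs.2 hms.not_gt

/-- The abstract one-dimensional lemma behind the existence and uniqueness of
`t(u)` in (95) in the proof of Proposition 18. -/
theorem one_dim_lemma_95
    (g g' : ℝ → ℝ)
    (hgcont : ContinuousOn g (Set.Icc 0 1))
    (hgderiv : ∀ t ∈ Set.Ioc (0:ℝ) 1, HasDerivWithinAt g (g' t) (Set.Icc 0 1) t)
    (tstar : ℝ) (htstar : tstar ∈ Set.Ioo (0:ℝ) 1)
    (hneg : ∀ t ∈ Set.Ioo (0:ℝ) tstar, g t < 0)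
    (hg1 : 0 < g 1)
    (hderivpos : ∀ t ∈ Set.Ioc (0:ℝ) 1, g t = 0 → 0 < g' t) :
    ∃ t₁ : ℝ, t₁ ∈ Set.Ioo (0:ℝ) 1 ∧ g t₁ = 0 ∧
      (∀ t ∈ Set.Ioo (0:ℝ) t₁, g t < 0) ∧
      (∀ t ∈ Set.Ioc t₁ 1, 0 < g t) ∧
      (∀ t' ∈ Set.Ioo (0:ℝ) 1, g t' = 0 → t' = t₁) := by
  obtain ⟨h0, h1⟩ := htstar
  have hx : g (tstar / 2) < 0 := hneg _ ⟨by linarith, by linarith⟩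
  obtain ⟨t₁, ht₁, hg₁⟩ := intermediate_value_Ioo (by linarith : tstar / 2 ≤ 1)
    (hgcont.mono (Set.Icc_subset_Icc (by linarith) le_rfl)) ⟨hx, hg1⟩
  have hpos : 0 < t₁ := by linarith [ht₁.1]
  have hright : ∀ t ∈ Set.Ioc t₁ 1, 0 < g t := fun t ht =>
    pos_of_nonneg_left hgcont hgderiv hderivpos hpos ht.1 ht.2 hg₁.ge
  have hleft : ∀ t ∈ Set.Ioo (0:ℝ) t₁, g t < 0 := fun t ht => by
    by_contra! h
    exact (pos_of_nonneg_left hgcont hgderiv hderivpos ht.1 ht.2 ht₁.2.le h).ne' hg₁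
  refine ⟨t₁, ⟨hpos, ht₁.2⟩, hg₁, hleft, hright, fun t ht h => ?_⟩
  rcases lt_trichotomy t t₁ with hlt | heq | hgt
  · exact absurd h (hleft t ⟨ht.1, hlt⟩).ne
  · exact heq
  · exact absurd h (hright t ⟨hgt, ht.2.le⟩).ne'
end
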